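/- Let γ > 0, ε ≥ 0, f ∈ [0,1]. There exists a constant C > 0, depending only on γ and ε, such that for every density matrix ρ₀ ∈ M₄(ℂ), the solution ρ(t) of the master equation ρ̇ = γ(tr(ρ)·ρ_W(f) − ρ) + (ε/2)·N(ρ) with ρ(0) = ρ₀ satisfies ‖ρ(t) − ρ_s‖ ≤ C·e^{−(γ+ε/2)t} for all t ≥ 0, where ρ_s = (γ·ρ_W(f) + ε·𝟙₄)/(γ + ε). That is, the steady state ρ_s is reached exponentially fast with rate at least γ + ε/2, uniformly in the initial state. -/

import Mathlib

/-!
The trace of `ρ` is conserved, so `D t = ρ t - ρ_s` is traceless, and since both marginals of the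
Werner state are maximally mixed, `D' = -(γ + ε) D + (ε/2) (P D + Q D)`, where
`P ρ = tr_B ρ ⊗ 𝟙₂` and `Q ρ = 𝟙₂ ⊗ tr_A ρ`. On traceless matrices `P` and `Q` are projections
with `P Q = Q P = 0` (`margA_margA`, `margA_margB`, ...). Hence the three components `P D`, `Q D`
and `D - P D - Q D` decouple: the first two decay at rate `γ + ε/2`, the last at the faster rate
`γ + ε` (`eq_exp_smul_of_hasDerivAt`).

Uniformity in the initial state comes from the fact that the entries of a density matrix have
modulus at most one (`norm_le_one_of_density`), and that `P` and `Q` do not increase the entrywise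
sup norm.
-/

open Matrix Kronecker

/-- Standard basis vector `|ab⟩` of `ℂ² ⊗ ℂ²`. -/
noncomputable def ket2 (a b : Fin 2) : Fin 2 × Fin 2 → ℂ := Pi.single (a, b) 1

/-- The maximally entangled Bell state `ψ₀ = (|00⟩+|11⟩)/√2`. -/
noncomputable def bell0 : Fin 2 × Fin 2 → ℂ :=
  (Real.sqrt 2 : ℂ)⁻¹ • (ket2 0 0 + ket2 1 1)

/-- `Ω = |ψ₀⟩⟨ψ₀|`. -/
noncomputable def Omega : Matrix (Fin 2 × Fin 2) (Fin 2 × Fin 2) ℂ :=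
  Matrix.vecMulVec bell0 (star bell0)

/-- The Werner state of fidelity `f`: `ρ_W(f) = f·Ω + (1−f)(I₄−Ω)/3`. -/
noncomputable def wernerState (f : ℝ) : Matrix (Fin 2 × Fin 2) (Fin 2 × Fin 2) ℂ :=
  (f : ℂ) • Omega + ((1 - f : ℝ) / 3 : ℂ) • ((1 : Matrix (Fin 2 × Fin 2) (Fin 2 × Fin 2) ℂ) - Omega)

/-- Partial trace over the second tensor factor. -/
noncomputable def trB (ρ : Matrix (Fin 2 × Fin 2) (Fin 2 × Fin 2) ℂ) :
    Matrix (Fin 2) (Fin 2) ℂ :=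
  Matrix.of fun a b => ∑ k : Fin 2, ρ (a, k) (b, k)

/-- Partial trace over the first tensor factor. -/
noncomputable def trA (ρ : Matrix (Fin 2 × Fin 2) (Fin 2 × Fin 2) ℂ) :
    Matrix (Fin 2) (Fin 2) ℂ :=
  Matrix.of fun a b => ∑ k : Fin 2, ρ (k, a) (k, b)

/-- The normalized identity `𝟙₂ = I₂/2`. -/
noncomputable def one2 : Matrix (Fin 2) (Fin 2) ℂ := (1 / 2 : ℂ) • 1

/-- The normalized identity `𝟙₄ = I₄/4`. -/
noncomputable def one4 : Matrix (Fin 2 × Fin 2) (Fin 2 × Fin 2) ℂ := (1 / 4 : ℂ) • 1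

/-- The local depolarizing noise term
`N(ρ) = (tr_B ρ) ⊗ 𝟙₂ + 𝟙₂ ⊗ (tr_A ρ) − 2ρ`. -/
noncomputable def noiseN (ρ : Matrix (Fin 2 × Fin 2) (Fin 2 × Fin 2) ℂ) :
    Matrix (Fin 2 × Fin 2) (Fin 2 × Fin 2) ℂ :=
  trB ρ ⊗ₖ one2 + one2 ⊗ₖ trA ρ - (2 : ℂ) • ρ

open scoped ComplexOrder

attribute [local instance] Matrix.normedAddCommGroup Matrix.normedSpace

/-- The map `P ρ = tr_B ρ ⊗ 𝟙₂`. -/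
noncomputable def margA :
    Matrix (Fin 2 × Fin 2) (Fin 2 × Fin 2) ℂ →ₗ[ℝ] Matrix (Fin 2 × Fin 2) (Fin 2 × Fin 2) ℂ where
  toFun ρ := trB ρ ⊗ₖ one2
  map_add' x y := by
    ext ⟨i, j⟩ ⟨k, l⟩
    simp [trB, kroneckerMap_apply]
    ring
  map_smul' c x := by
    ext ⟨i, j⟩ ⟨k, l⟩
    simp [trB, kroneckerMap_apply]
    ring

/-- The map `Q ρ = 𝟙₂ ⊗ tr_A ρ`. -/
noncomputable def margB :
    Matrix (Fin 2 × Fin 2) (Fin 2 × Fin 2) ℂ →ₗ[ℝ] Matrix (Fin 2 × Fin 2) (Fin 2 × Fin 2) ℂ where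
  toFun ρ := one2 ⊗ₖ trA ρ
  map_add' x y := by
    ext ⟨i, j⟩ ⟨k, l⟩
    simp [trA, kroneckerMap_apply]
    ring
  map_smul' c x := by
    ext ⟨i, j⟩ ⟨k, l⟩
    simp [trA, kroneckerMap_apply]
    ring

lemma margA_apply (ρ : Matrix (Fin 2 × Fin 2) (Fin 2 × Fin 2) ℂ) (i j k l : Fin 2) :
    margA ρ (i, j) (k, l) =
      (ρ (i, 0) (k, 0) + ρ (i, 1) (k, 1)) * (if j = l then 1 / 2 else 0) := by
  simp [margA, trB, one2, kroneckerMap_apply, Matrix.one_apply]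

lemma margB_apply (ρ : Matrix (Fin 2 × Fin 2) (Fin 2 × Fin 2) ℂ) (i j k l : Fin 2) :
    margB ρ (i, j) (k, l) =
      (if i = k then 1 / 2 else 0) * (ρ (0, j) (0, l) + ρ (1, j) (1, l)) := by
  simp [margB, trA, one2, kroneckerMap_apply, Matrix.one_apply]

lemma noiseN_eq (ρ : Matrix (Fin 2 × Fin 2) (Fin 2 × Fin 2) ℂ) :
    noiseN ρ = margA ρ + margB ρ - (2 : ℝ) • ρ := by
  ext i j
  simp [noiseN, margA, margB]

lemma trace_four (ρ : Matrix (Fin 2 × Fin 2) (Fin 2 × Fin 2) ℂ) :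
    ρ.trace = ρ (0, 0) (0, 0) + ρ (0, 1) (0, 1) + (ρ (1, 0) (1, 0) + ρ (1, 1) (1, 1)) := by
  simp [Matrix.trace, Fintype.sum_prod_type]

lemma margA_margA (ρ : Matrix (Fin 2 × Fin 2) (Fin 2 × Fin 2) ℂ) :
    margA (margA ρ) = margA ρ := by
  ext ⟨i, j⟩ ⟨k, l⟩
  simp only [margA_apply, if_true]
  ring

lemma margB_margB (ρ : Matrix (Fin 2 × Fin 2) (Fin 2 × Fin 2) ℂ) :
    margB (margB ρ) = margB ρ := by
  ext ⟨i, j⟩ ⟨k, l⟩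
  simp only [margB_apply, if_true]
  ring

/-- On traceless matrices the two marginal projections annihilate each other, because `P (Q ρ)`
is a multiple of `(tr ρ) I`. -/
lemma margA_margB (ρ : Matrix (Fin 2 × Fin 2) (Fin 2 × Fin 2) ℂ) (h : ρ.trace = 0) :
    margA (margB ρ) = 0 := by
  rw [trace_four] at h
  ext ⟨i, j⟩ ⟨k, l⟩
  simp only [margA_apply, margB_apply, Matrix.zero_apply]
  linear_combination (if i = k then 1 / 2 else 0) * (if j = l then 1 / 2 else 0) * h

lemma margB_margA (ρ : Matrix (Fin 2 × Fin 2) (Fin 2 × Fin 2) ℂ) (h : ρ.trace = 0) :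
    margB (margA ρ) = 0 := by
  rw [trace_four] at h
  ext ⟨i, j⟩ ⟨k, l⟩
  simp only [margA_apply, margB_apply, Matrix.zero_apply]
  linear_combination (if i = k then 1 / 2 else 0) * (if j = l then 1 / 2 else 0) * h

lemma trace_margA (ρ : Matrix (Fin 2 × Fin 2) (Fin 2 × Fin 2) ℂ) :
    (margA ρ).trace = ρ.trace := by
  simp only [trace_four, margA_apply, if_true]
  ring

lemma trace_margB (ρ : Matrix (Fin 2 × Fin 2) (Fin 2 × Fin 2) ℂ) :
    (margB ρ).trace = ρ.trace := by
  simp only [trace_four, margB_apply, if_true]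
  ring

lemma trace_noiseN (ρ : Matrix (Fin 2 × Fin 2) (Fin 2 × Fin 2) ℂ) :
    (noiseN ρ).trace = 0 := by
  rw [noiseN_eq, trace_sub, trace_add, trace_margA, trace_margB, trace_smul, two_smul, sub_self]

lemma norm_margA_le (ρ : Matrix (Fin 2 × Fin 2) (Fin 2 × Fin 2) ℂ) : ‖margA ρ‖ ≤ ‖ρ‖ := by
  rw [Matrix.norm_le_iff (norm_nonneg _)]
  rintro ⟨i, j⟩ ⟨k, l⟩
  rw [margA_apply]
  have h0 := ρ.norm_entry_le_entrywise_sup_norm (i := (i, 0)) (j := (k, 0))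
  have h1 := ρ.norm_entry_le_entrywise_sup_norm (i := (i, 1)) (j := (k, 1))
  have h2 := norm_add_le (ρ (i, 0) (k, 0)) (ρ (i, 1) (k, 1))
  split_ifs
  · rw [norm_mul]
    norm_num
    linarith
  · simp

lemma norm_margB_le (ρ : Matrix (Fin 2 × Fin 2) (Fin 2 × Fin 2) ℂ) : ‖margB ρ‖ ≤ ‖ρ‖ := by
  rw [Matrix.norm_le_iff (norm_nonneg _)]
  rintro ⟨i, j⟩ ⟨k, l⟩
  rw [margB_apply]
  have h0 := ρ.norm_entry_le_entrywise_sup_norm (i := (0, j)) (j := (0, l))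
  have h1 := ρ.norm_entry_le_entrywise_sup_norm (i := (1, j)) (j := (1, l))
  have h2 := norm_add_le (ρ (0, j) (0, l)) (ρ (1, j) (1, l))
  split_ifs
  · rw [norm_mul]
    norm_num
    linarith
  · simp

lemma Omega_apply (i j k l : Fin 2) :
    Omega (i, j) (k, l) = if i = j ∧ k = l then 1 / 2 else 0 := by
  have h : ((Real.sqrt 2 : ℂ))⁻¹ * (Real.sqrt 2 : ℂ)⁻¹ = 1 / 2 := by
    rw [← mul_inv, ← Complex.ofReal_mul, Real.mul_self_sqrt (by norm_num)]
    norm_num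
  fin_cases i <;> fin_cases j <;> fin_cases k <;> fin_cases l <;>
    simp [Omega, bell0, ket2, Matrix.vecMulVec_apply] <;> simpa using h

lemma trace_wernerState (f : ℝ) : (wernerState f).trace = 1 := by
  simp [trace_four, wernerState, Omega_apply]
  ring

lemma trace_one4 : one4.trace = 1 := by
  simp [one4]

lemma margA_wernerState (f : ℝ) : margA (wernerState f) = one4 := by
  ext ⟨i, j⟩ ⟨k, l⟩
  fin_cases i <;> fin_cases j <;> fin_cases k <;> fin_cases l <;>
    simp [margA_apply, wernerState, Omega_apply, one4] <;> ring

lemma margB_wernerState (f : ℝ) : margB (wernerState f) = one4 := by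
  ext ⟨i, j⟩ ⟨k, l⟩
  fin_cases i <;> fin_cases j <;> fin_cases k <;> fin_cases l <;>
    simp [margB_apply, wernerState, Omega_apply, one4] <;> ring

lemma margA_one4 : margA one4 = one4 := by
  rw [← margA_wernerState 0, margA_margA]

lemma margB_one4 : margB one4 = one4 := by
  rw [← margB_wernerState 0, margB_margB]

/-- Uniqueness for the linear equation `y' = -k y` on `[0, ∞)`. -/
lemma eq_exp_smul_of_hasDerivAt {E : Type*} [NormedAddCommGroup E] [NormedSpace ℝ E]
    (k : ℝ) (y : ℝ → E) (h : ∀ t : ℝ, 0 ≤ t → HasDerivAt y (-k • y t) t) (t : ℝ) (ht : 0 ≤ t) :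
    y t = Real.exp (-k * t) • y 0 := by
  have hd : ∀ s : ℝ, 0 ≤ s → HasDerivAt (fun s => Real.exp (k * s) • y s) 0 s := by
    intro s hs
    have h1 : HasDerivAt (fun s : ℝ => Real.exp (k * s)) (Real.exp (k * s) * k) s := by
      simpa using ((hasDerivAt_id s).const_mul k).exp
    refine (h1.smul (h s hs)).congr_deriv ?_
    module
  have hc := constant_of_has_deriv_right_zero (a := 0) (b := t)
    (fun s hs => (hd s hs.1).continuousAt.continuousWithinAt)
    (fun s hs => (hd s hs.1).hasDerivWithinAt) t ⟨ht, le_rfl⟩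
  simp only [mul_zero, Real.exp_zero, one_smul] at hc
  rw [← hc, smul_smul, ← Real.exp_add]
  simp

/-- The bound `|ρ i j|² ≤ ρ i i * ρ j j ≤ 1` for a density matrix, from its `2 × 2` principal
minors. -/
lemma norm_le_one_of_density (ρ : Matrix (Fin 2 × Fin 2) (Fin 2 × Fin 2) ℂ)
    (hp : ρ.PosSemidef) (ht : ρ.trace = 1) : ‖ρ‖ ≤ 1 := by
  rw [Matrix.norm_le_iff zero_le_one]
  intro i j
  have hnn : ∀ k, 0 ≤ (ρ k k).re := fun k => (Complex.nonneg_iff.1 hp.diag_nonneg).1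
  have him : ∀ k, (ρ k k).im = 0 := fun k => (Complex.nonneg_iff.1 hp.diag_nonneg).2.symm
  have hle : ∀ k, (ρ k k).re ≤ 1 := by
    intro k
    have hs : ∑ m, (ρ m m).re = 1 := by
      have := congrArg Complex.re ht
      simpa [Matrix.trace] using this
    rw [← hs]
    exact Finset.single_le_sum (f := fun m => (ρ m m).re) (fun m _ => hnn m) (Finset.mem_univ k)
  have hdet := (hp.submatrix ![i, j]).det_nonneg
  rw [Matrix.det_fin_two] at hdet
  simp only [Matrix.submatrix_apply, Matrix.cons_val_zero, Matrix.cons_val_one] at hdet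
  have hji : ρ j i = star (ρ i j) := (hp.isHermitian.apply j i).symm
  have hre := (Complex.nonneg_iff.1 hdet).1
  rw [hji] at hre
  have hsq : ‖ρ i j‖ ^ 2 = (ρ i j).re * (ρ i j).re + (ρ i j).im * (ρ i j).im := by
    rw [← Complex.normSq_eq_norm_sq, Complex.normSq_apply]
  simp [him] at hre
  have := mul_le_one₀ (hle i) (hnn j) (hle j)
  nlinarith [norm_nonneg (ρ i j)]

/-- A bound on the Werner states that is uniform in the fidelity. -/
lemma norm_wernerState_le (f : ℝ) (hf : f ∈ Set.Icc (0 : ℝ) 1) :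
    ‖wernerState f‖ ≤
      ‖Omega‖ + ‖(1 : Matrix (Fin 2 × Fin 2) (Fin 2 × Fin 2) ℂ) - Omega‖ := by
  have h1 : wernerState f = f • Omega + ((1 - f) / 3) • (1 - Omega) := by
    ext i j
    simp [wernerState]
  rw [h1]
  refine (norm_add_le _ _).trans (add_le_add ?_ ?_)
  · rw [norm_smul, Real.norm_of_nonneg hf.1]
    exact mul_le_of_le_one_left (norm_nonneg _) hf.2
  · rw [norm_smul, Real.norm_of_nonneg (by linarith [hf.2])]
    exact mul_le_of_le_one_left (norm_nonneg _) (by linarith [hf.1])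

/-- The steady state is a convex combination of the Werner state and the maximally mixed state. -/
lemma norm_steadyState_le (γ ε f : ℝ) (hγ : 0 < γ) (hε : 0 ≤ ε) :
    ‖((γ + ε : ℝ)⁻¹ : ℝ) • (γ • wernerState f + ε • one4)‖ ≤ ‖wernerState f‖ + ‖one4‖ := by
  have hpos : 0 < γ + ε := by linarith
  rw [norm_smul, Real.norm_of_nonneg (inv_nonneg.2 hpos.le), inv_mul_le_iff₀ hpos]
  refine (norm_add_le _ _).trans ?_
  rw [norm_smul, norm_smul, Real.norm_of_nonneg hγ.le, Real.norm_of_nonneg hε]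
  nlinarith [norm_nonneg (wernerState f), norm_nonneg one4,
    mul_nonneg hε (norm_nonneg (wernerState f)), mul_nonneg hγ.le (norm_nonneg one4)]

theorem exponential_convergence_to_werner_steady_state (γ ε : ℝ)
    (hγ : 0 < γ) (hε : 0 ≤ ε) :
    ∃ C : ℝ, 0 < C ∧
      ∀ f : ℝ, f ∈ Set.Icc (0 : ℝ) 1 →
      ∀ ρ0 : Matrix (Fin 2 × Fin 2) (Fin 2 × Fin 2) ℂ,
        ρ0.PosSemidef → ρ0.trace = 1 →
        ∀ ρ : ℝ → Matrix (Fin 2 × Fin 2) (Fin 2 × Fin 2) ℂ,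
          ρ 0 = ρ0 →
          (∀ t : ℝ, 0 ≤ t →
            HasDerivAt ρ
              (γ • ((ρ t).trace • wernerState f - ρ t) + (ε / 2) • noiseN (ρ t)) t) →
          ∀ t : ℝ, 0 ≤ t →
            ‖ρ t - ((γ + ε : ℝ)⁻¹ : ℝ) • (γ • wernerState f + ε • one4)‖ ≤
              C * Real.exp (-(γ + ε / 2) * t) := by
  refine ⟨5 * (1 + ((‖Omega‖ + ‖(1 : Matrix (Fin 2 × Fin 2) (Fin 2 × Fin 2) ℂ) - Omega‖)
    + ‖one4‖)), by positivity, ?_⟩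
  intro f hf ρ0 hp ht0 ρ hρ0 hρ t ht
  have hpos : γ + ε ≠ 0 := by linarith
  have htr : ∀ s : ℝ, 0 ≤ s → (ρ s).trace = 1 := by
    intro s hs
    have h := eq_exp_smul_of_hasDerivAt 0 (fun s => (ρ s).trace) (fun u hu => by
      have h1 := ((Matrix.traceLinearMap (Fin 2 × Fin 2) ℝ ℂ).toContinuousLinearMap.hasFDerivAt
        (x := ρ u)).comp_hasDerivAt u (hρ u hu)
      refine h1.congr_deriv ?_
      change Matrix.trace (γ • ((ρ u).trace • wernerState f - ρ u) + (ε / 2) • noiseN (ρ u)) = _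
      simp [trace_add, trace_sub, trace_smul, trace_wernerState, trace_noiseN]) s hs
    simpa [hρ0, ht0] using h
  set S := ((γ + ε : ℝ)⁻¹ : ℝ) • (γ • wernerState f + ε • one4) with hS
  have hStr : S.trace = 1 := by
    rw [hS, trace_smul, trace_add, trace_smul, trace_smul, trace_wernerState, trace_one4,
      ← add_smul, smul_smul, inv_mul_cancel₀ hpos, one_smul]
  have hSeq : (γ + ε) • S = γ • wernerState f + ε • one4 := by
    rw [hS, smul_smul, mul_inv_cancel₀ hpos, one_smul]
  have hSA : margA S = one4 := by
    rw [hS, map_smul, map_add, map_smul, map_smul, margA_wernerState, margA_one4,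
      ← add_smul, smul_smul, inv_mul_cancel₀ hpos, one_smul]
  have hSB : margB S = one4 := by
    rw [hS, map_smul, map_add, map_smul, map_smul, margB_wernerState, margB_one4,
      ← add_smul, smul_smul, inv_mul_cancel₀ hpos, one_smul]
  have hDtr : ∀ s : ℝ, 0 ≤ s → (ρ s - S).trace = 0 := by
    intro s hs
    rw [trace_sub, htr s hs, hStr, sub_self]
  have hD : ∀ s : ℝ, 0 ≤ s → HasDerivAt (fun s => ρ s - S)
      (-(γ + ε) • (ρ s - S) + (ε / 2) • (margA (ρ s - S) + margB (ρ s - S))) s := by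
    intro s hs
    refine ((hρ s hs).sub_const S).congr_deriv ?_
    rw [htr s hs, noiseN_eq, map_sub, map_sub, hSA, hSB, one_smul]
    linear_combination (norm := module) (-1 : ℝ) • hSeq
  have hA : ∀ s : ℝ, 0 ≤ s → HasDerivAt (fun s => margA (ρ s - S))
      (-(γ + ε / 2) • margA (ρ s - S)) s := by
    intro s hs
    have h1 := (margA.toContinuousLinearMap.hasFDerivAt (x := ρ s - S)).comp_hasDerivAt s (hD s hs)
    refine h1.congr_deriv ?_
    change margA _ = _
    simp only [map_add, map_smul]
    rw [margA_margA, margA_margB _ (hDtr s hs)]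
    module
  have hB : ∀ s : ℝ, 0 ≤ s → HasDerivAt (fun s => margB (ρ s - S))
      (-(γ + ε / 2) • margB (ρ s - S)) s := by
    intro s hs
    have h1 := (margB.toContinuousLinearMap.hasFDerivAt (x := ρ s - S)).comp_hasDerivAt s (hD s hs)
    refine h1.congr_deriv ?_
    change margB _ = _
    simp only [map_add, map_smul]
    rw [margB_margB, margB_margA _ (hDtr s hs)]
    module
  have hR : ∀ s : ℝ, 0 ≤ s → HasDerivAt (fun s => ρ s - S - margA (ρ s - S) - margB (ρ s - S))
      (-(γ + ε) • (ρ s - S - margA (ρ s - S) - margB (ρ s - S))) s := by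
    intro s hs
    refine (((hD s hs).sub (hA s hs)).sub (hB s hs)).congr_deriv ?_
    module
  have eA := eq_exp_smul_of_hasDerivAt _ _ hA t ht
  have eB := eq_exp_smul_of_hasDerivAt _ _ hB t ht
  have eR := eq_exp_smul_of_hasDerivAt _ _ hR t ht
  have hdec : ρ t - S = margA (ρ t - S) + margB (ρ t - S)
      + (ρ t - S - margA (ρ t - S) - margB (ρ t - S)) := by abel
  simp only [hρ0] at eA eB eR
  rw [hdec, eR, eA, eB]
  have hexp : Real.exp (-(γ + ε) * t) ≤ Real.exp (-(γ + ε / 2) * t) :=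
    Real.exp_le_exp.2 (by nlinarith [mul_nonneg hε ht])
  have hD0 : ‖ρ0 - S‖ ≤ 1 + ((‖Omega‖ +
      ‖(1 : Matrix (Fin 2 × Fin 2) (Fin 2 × Fin 2) ℂ) - Omega‖) + ‖one4‖) := by
    have h1 := norm_le_one_of_density ρ0 hp ht0
    have h2 := norm_wernerState_le f hf
    have h3 := norm_steadyState_le γ ε f hγ hε
    have h4 := norm_sub_le ρ0 S
    linarith
  have nA := norm_margA_le (ρ0 - S)
  have nB := norm_margB_le (ρ0 - S)
  have nR : ‖ρ0 - S - margA (ρ0 - S) - margB (ρ0 - S)‖ ≤ 3 * ‖ρ0 - S‖ := by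
    have h1 := norm_sub_le (ρ0 - S - margA (ρ0 - S)) (margB (ρ0 - S))
    have h2 := norm_sub_le (ρ0 - S) (margA (ρ0 - S))
    linarith
  set e := Real.exp (-(γ + ε / 2) * t) with he
  have hepos : 0 ≤ e := (Real.exp_pos _).le
  calc _ ≤ e * ‖margA (ρ0 - S)‖ + e * ‖margB (ρ0 - S)‖
        + Real.exp (-(γ + ε) * t) * ‖ρ0 - S - margA (ρ0 - S) - margB (ρ0 - S)‖ := by
        refine norm_add₃_le.trans (le_of_eq ?_)
        rw [norm_smul, norm_smul, norm_smul, Real.norm_of_nonneg hepos,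
          Real.norm_of_nonneg (Real.exp_pos _).le]
    _ ≤ e * ‖ρ0 - S‖ + e * ‖ρ0 - S‖ + e * (3 * ‖ρ0 - S‖) := by gcongr
    _ = 5 * ‖ρ0 - S‖ * e := by ring
    _ ≤ _ := by gcongr
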